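/- arXiv:2507.05231 — 3 statements merged into one kernel-verified Lean document; each statement's English description precedes it below -/
import Mathlib

section
/- For every ε > 0 there exists N such that for all integers n ≥ N, η(n) ≥ 2^{-(2√(log₂(4/3)) + ε)·√(log₂ n)}. -/
/-- `eta m` is the maximum of `e(G)/m²` over all simple graphs `G` on `m` vertices
in which every edge is contained in exactly one triangle. -/
noncomputable def eta (m : ℕ) : ℝ :=
  sSup {x : ℝ | ∃ G : SimpleGraph (Fin m),
    (∀ ⦃u v⦄, G.Adj u v → ∃! w, G.Adj u w ∧ G.Adj v w) ∧
    x = (G.edgeSet.ncard : ℝ) / m ^ 2}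

/-!
Let `A` be the set of lattice points of a ball of radius `R` in `ℝ ^ D`. A pair `(a, b)` in `A` for
which `-a - b` also lies in `A` gives a triangle on three disjoint copies of `A`. If only the pairs
with `a - b` on a fixed sphere are used, these triangles are edge-disjoint and create no further
triangles, because a sphere contains no nontrivial three-term arithmetic progression. There are
only `O(R²)` relevant spheres, so the best one keeps a `1 / O(R²)` proportion of the pairs.

For given `a`, the admissible `b` fill the intersection of the balls of radius `R` around `0` and
`-a`. As `|a| ≤ R`, for every `c < √(3 / 4)` this intersection contains a translate of a slab that
makes up a fixed proportion of a ball of radius `c R`, hence almost a proportion `(3 / 4) ^ (D / 2)`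
of all `b`. With `n ≈ 3 |A|`, the radius is about `√D n ^ (1 / D)`, and the total loss
`(4 / 3) ^ (D / 2) n ^ (2 / D)` is minimised by `D = 2 √(log₂ n / log₂ (4 / 3))`, where it equals
`2 ^ (2 √(log₂ (4 / 3) log₂ n))`.
-/

open Finset Filter MeasureTheory Metric

section LocallyLinear

lemma existsUnique_adj_and_adj_of_locallyLinear {V : Type*} {G : SimpleGraph V}
    (hG : G.LocallyLinear) {u v : V} (huv : G.Adj u v) : ∃! w, G.Adj u w ∧ G.Adj v w := by
  classical
  refine existsUnique_of_exists_of_unique ?_ fun w w' ⟨huw, hvw⟩ hw' ↦ ?_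
  · obtain ⟨s, hs, hu, hv⟩ := hG.2 huv
    obtain ⟨w, hw, hwuv⟩ := exists_mem_notMem_of_card_lt_card
      (s := {u, v}) (t := s) (card_le_two.trans_lt <| by simp [hs.card_eq])
    simp only [Finset.mem_insert, Finset.mem_singleton, not_or] at hwuv
    exact ⟨w, hs.isClique hu hw (Ne.symm hwuv.1), hs.isClique hv hw (Ne.symm hwuv.2)⟩
  · have htriangles : ({u, v, w} : Finset V) = {u, v, w'} :=
      hG.1.eq (by simp [SimpleGraph.is3Clique_triple_iff, huv, huw, hvw])
        (by simp [SimpleGraph.is3Clique_triple_iff, huv, hw'])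
        (Set.Nontrivial.not_subsingleton ⟨u, by simp, v, by simp, huv.ne⟩)
    have hw : w ∈ ({u, v, w'} : Finset V) := htriangles ▸ by simp
    simpa [huw.ne', hvw.ne'] using hw

lemma ruzsaSzemerediNumberNat_div_sq_le_eta (n : ℕ) :
    3 * (ruzsaSzemerediNumberNat n : ℝ) / n ^ 2 ≤ eta n := by
  classical
  obtain ⟨G, _, hcard, hG⟩ := ruzsaSzemerediNumber_spec (α := Fin n)
  refine le_csSup ((Set.finite_range fun G : SimpleGraph (Fin n) ↦
    (G.edgeSet.ncard : ℝ) / n ^ 2).subset ?_).bddAbove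
    ⟨G, fun _ _ ↦ existsUnique_adj_and_adj_of_locallyLinear hG, ?_⟩
  · rintro _ ⟨G, -, rfl⟩
    exact ⟨G, rfl⟩
  · rw [← SimpleGraph.coe_edgeFinset, Set.ncard_coe_finset, hG.card_edgeFinset, hcard]
    push_cast
    rfl

end LocallyLinear

section ZeroSumPairs

variable {G : Type*} [AddCommGroup G] [DecidableEq G]

/-- The pairs of elements of `A` that a third element of `A` completes to a triple with sum zero;
they index the edge-disjoint triangles of the construction. -/
def zeroSumPairs (A : Finset G) : Finset (G × G) := {p ∈ A ×ˢ A | -p.1 - p.2 ∈ A}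

lemma mem_zeroSumPairs {A : Finset G} {p : G × G} :
    p ∈ zeroSumPairs A ↔ p.1 ∈ A ∧ p.2 ∈ A ∧ -p.1 - p.2 ∈ A := by
  simp [zeroSumPairs, and_assoc]

lemma card_zeroSumPairs (A : Finset G) : #(zeroSumPairs A) = ∑ x ∈ A, #{y ∈ A | -x - y ∈ A} := by
  simp only [zeroSumPairs, card_filter, sum_product]

open SimpleGraph.TripartiteFromTriangles in
lemma card_zeroSumPairs_filter_sub_mem_le (A : Finset G) {S : Set G} [DecidablePred (· ∈ S)]
    (hS : ThreeAPFree S) :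
    #{p ∈ zeroSumPairs A | p.1 - p.2 ∈ S} ≤ ruzsaSzemerediNumberNat (3 * #A) := by
  let T : Finset (A × A × A) := {t | (t.1 + t.2.1 + t.2.2 : G) = 0 ∧ (t.1 - t.2.1 : G) ∈ S}
  have mem_T {a b c : A} : (a, b, c) ∈ T ↔ (a + b + c : G) = 0 ∧ (a - b : G) ∈ S := by simp [T]
  have hdisj : ExplicitDisjoint T := by
    constructor <;> intro a b c d h h' <;> ext <;> rw [mem_T] at h h' <;>
      simpa using h.1.trans h'.1.symm
  -- An accidental triangle with `a + b + c = s` puts `a - b - s`, `a - b`, `a - b + s` into `S`.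
  have haccidental : NoAccidental T := by
    refine ⟨fun a a' b b' c c' ha hb hc ↦ .inl <| Subtype.ext ?_⟩
    rw [mem_T] at ha hb hc
    have hAP : (a' - b : G) + (a - b') = (a - b) + (a - b) := calc
      (a' - b : G) + (a - b') = (a - b) + (a - b) + ((a' + b + c) - (a + b' + c)) := by abel
      _ = (a - b) + (a - b) := by rw [ha.1, hb.1, sub_zero, add_zero]
    simpa using (hS ha.2 hc.2 hb.2 hAP).symm
  have hsub : {p ∈ zeroSumPairs A | p.1 - p.2 ∈ S} ⊆ T.image fun t ↦ (t.1.1, t.2.1.1) := by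
    intro p hp
    rw [Finset.mem_filter, mem_zeroSumPairs] at hp
    exact mem_image.2 ⟨(⟨p.1, hp.1.1⟩, ⟨p.2, hp.1.2.1⟩, ⟨_, hp.1.2.2⟩), by simp [T, hp.2], rfl⟩
  calc #{p ∈ zeroSumPairs A | p.1 - p.2 ∈ S} ≤ #T := (card_le_card hsub).trans card_image_le
    _ = #((graph T).cliqueFinset 3) := (card_triangles T).symm
    _ ≤ ruzsaSzemerediNumber (A ⊕ A ⊕ A) := (locallyLinear T).le_ruzsaSzemerediNumber
    _ = ruzsaSzemerediNumberNat (3 * #A) := by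
      rw [← ruzsaSzemerediNumberNat_card]
      congr 1
      simp only [Fintype.card_sum, Fintype.card_coe]
      ring

end ZeroSumPairs

section Lens

variable {E : Type*} [NormedAddCommGroup E] [InnerProductSpace ℝ E] {r η : ℝ} {x : E}

/-- The linear map multiplying `x` by `η` and fixing the orthogonal complement of `x`; for `x = 0`
it is the identity. -/
noncomputable def contractAlong (η : ℝ) (x : E) : E →ₗ[ℝ] E :=
  LinearMap.transvection (innerₗ E x) (-((1 - η) / ‖x‖ ^ 2) • x)

lemma contractAlong_apply (η : ℝ) (x w : E) :
    contractAlong η x w = w + inner ℝ x w • -((1 - η) / ‖x‖ ^ 2) • x := rfl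

lemma det_contractAlong [FiniteDimensional ℝ E] (η : ℝ) (hx : x ≠ 0) :
    LinearMap.det (contractAlong η x) = η := by
  have : ‖x‖ ≠ 0 := norm_ne_zero_iff.2 hx
  simp only [contractAlong, LinearMap.transvection.det, innerₗ_apply_apply, inner_smul_right,
    real_inner_self_eq_norm_sq]
  field_simp
  ring

lemma inner_contractAlong_right (η : ℝ) (x w : E) :
    inner ℝ x (contractAlong η x w) = η * inner ℝ x w := by
  obtain rfl | hx := eq_or_ne x 0
  · simp
  have : ‖x‖ ≠ 0 := norm_ne_zero_iff.2 hx
  simp only [contractAlong_apply, inner_add_right, inner_smul_right, real_inner_self_eq_norm_sq]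
  field_simp
  ring

lemma norm_contractAlong_le (hη₀ : 0 ≤ η) (hη₁ : η ≤ 1) (x w : E) :
    ‖contractAlong η x w‖ ≤ ‖w‖ := by
  have hsq : ‖contractAlong η x w‖ ^ 2 = ‖w‖ ^ 2 - (1 - η ^ 2) * (inner ℝ x w / ‖x‖) ^ 2 := by
    obtain rfl | hx := eq_or_ne x 0
    · simp [contractAlong_apply]
    have : ‖x‖ ≠ 0 := norm_ne_zero_iff.2 hx
    rw [contractAlong_apply, norm_add_sq_real, norm_smul, norm_smul, inner_smul_right,
      inner_smul_right, real_inner_comm, mul_pow, mul_pow, Real.norm_eq_abs, Real.norm_eq_abs,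
      sq_abs, sq_abs]
    field_simp
    ring
  refine le_of_sq_le_sq (hsq.trans_le (sub_le_self _ ?_)) (norm_nonneg _)
  exact mul_nonneg (sub_nonneg.2 (pow_le_one₀ hη₀ hη₁)) (sq_nonneg _)

variable [FiniteDimensional ℝ E] [MeasurableSpace E] [BorelSpace E] (μ : Measure E)
  [μ.IsAddHaarMeasure]

lemma mul_measureReal_closedBall_le_measureReal_slab (x : E) (hη₀ : 0 ≤ η) (hη₁ : η ≤ 1) :
    η * μ.real (closedBall 0 r) ≤
      μ.real (closedBall 0 r ∩ {w | |inner ℝ x w| ≤ η * (‖x‖ * r)}) := by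
  obtain rfl | hx := eq_or_ne x 0
  · simpa using mul_le_of_le_one_left measureReal_nonneg hη₁
  have hsub : contractAlong η x '' closedBall 0 r ⊆
      closedBall 0 r ∩ {w | |inner ℝ x w| ≤ η * (‖x‖ * r)} := by
    rintro _ ⟨w, hw, rfl⟩
    rw [mem_closedBall_zero_iff] at hw
    refine ⟨mem_closedBall_zero_iff.2 ((norm_contractAlong_le hη₀ hη₁ x w).trans hw), ?_⟩
    rw [Set.mem_ofPred_eq, inner_contractAlong_right, abs_mul, abs_of_nonneg hη₀]
    gcongr
    exact (abs_real_inner_le_norm x w).trans (by gcongr)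
  calc η * μ.real (closedBall 0 r) = μ.real (contractAlong η x '' closedBall 0 r) := by
        rw [measureReal_def, measureReal_def, μ.addHaar_image_linearMap, det_contractAlong η hx,
          abs_of_nonneg hη₀, ENNReal.toReal_mul, ENNReal.toReal_ofReal hη₀]
    _ ≤ _ := measureReal_mono hsub
      (measure_ne_top_of_subset Set.inter_subset_left measure_closedBall_lt_top.ne)

-- Translating the intersection by `-x / 2` centres it, and it then contains a slab of a ball.
lemma mul_measureReal_closedBall_le_measureReal_lens {R : ℝ} (x : E) (hη₀ : 0 ≤ η) (hη₁ : η ≤ 1)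
    (hR : 0 ≤ R) (hx : r ^ 2 + ‖x‖ ^ 2 / 4 + η * (‖x‖ * r) ≤ R ^ 2) :
    η * μ.real (closedBall 0 r) ≤ μ.real (closedBall 0 R ∩ closedBall (-x) R) := by
  refine (mul_measureReal_closedBall_le_measureReal_slab μ x hη₀ hη₁).trans ?_
  have hhalf : ‖(1 / 2 : ℝ) • x‖ ^ 2 = ‖x‖ ^ 2 / 4 := by
    rw [norm_smul, mul_pow]; norm_num; ring
  rw [measureReal_def μ (_ ∩ closedBall _ _), ← measure_preimage_add_right μ (-(1 / 2 : ℝ) • x),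
    ← measureReal_def]
  refine measureReal_mono (fun w hw ↦ ?_) ?_
  · rw [Set.mem_inter_iff, mem_closedBall_zero_iff, Set.mem_ofPred_eq, abs_le,
      real_inner_comm] at hw
    have hw₁ : ‖w‖ ^ 2 ≤ r ^ 2 := pow_le_pow_left₀ (norm_nonneg _) hw.1 2
    rw [Set.mem_preimage, Set.mem_inter_iff, mem_closedBall_zero_iff, mem_closedBall_iff_norm]
    constructor
    · rw [neg_smul, ← sub_eq_add_neg]
      refine le_of_sq_le_sq ?_ hR
      rw [norm_sub_sq_real, hhalf, inner_smul_right]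
      linarith [hw.2.1, hw.2.2]
    · rw [show w + -(1 / 2 : ℝ) • x - -x = w + (1 / 2 : ℝ) • x by module]
      refine le_of_sq_le_sq ?_ hR
      rw [norm_add_sq_real, hhalf, inner_smul_right]
      linarith [hw.2.1, hw.2.2]
  · rw [measure_preimage_add_right]
    exact measure_ne_top_of_subset Set.inter_subset_left measure_closedBall_lt_top.ne

end Lens

section LatticePoints

variable {ι : Type*}

/-- The inclusion of the integer lattice into Euclidean space. -/
def intVec : (ι → ℤ) →+ EuclideanSpace ℝ ι where
  toFun z := WithLp.toLp 2 fun i ↦ (z i : ℝ)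
  map_zero' := by ext; simp
  map_add' _ _ := by ext; simp

/-- The coordinatewise floor; its fibres are the unit cells attached to the lattice points. -/
noncomputable def floorVec (x : EuclideanSpace ℝ ι) : ι → ℤ := fun i ↦ ⌊x i⌋

@[simp] lemma intVec_apply (z : ι → ℤ) (i : ι) : intVec z i = z i := rfl

lemma intVec_injective : Function.Injective (intVec (ι := ι)) := fun z w h ↦ by
  ext i
  simpa using congrArg (· i) h

lemma preimage_floorVec_singleton (z : ι → ℤ) :
    floorVec ⁻¹' {z} = (MeasurableEquiv.toLp 2 (ι → ℝ)).symm ⁻¹'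
      Set.univ.pi fun i ↦ Set.Ico (z i : ℝ) (z i + 1) := by
  ext x
  simp [floorVec, funext_iff, Int.floor_eq_iff]

variable [Fintype ι]

lemma norm_intVec_sq (z : ι → ℤ) : ‖intVec z‖ ^ 2 = ((∑ i, z i ^ 2 : ℤ) : ℝ) := by
  simp [EuclideanSpace.norm_sq_eq]

lemma norm_sub_intVec_floorVec_le (x : EuclideanSpace ℝ ι) :
    ‖x - intVec (floorVec x)‖ ≤ √(Fintype.card ι) := by
  rw [EuclideanSpace.norm_eq]
  gcongr
  calc ∑ i, ‖x i - ⌊x i⌋‖ ^ 2 ≤ ∑ _i : ι, (1 : ℝ) := by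
        gcongr with i
        rw [Int.self_sub_floor, Real.norm_of_nonneg (Int.fract_nonneg _)]
        exact pow_le_one₀ (Int.fract_nonneg _) (Int.fract_lt_one _).le
    _ = Fintype.card ι := by simp

lemma norm_intVec_floorVec_le (x : EuclideanSpace ℝ ι) :
    ‖intVec (floorVec x)‖ ≤ ‖x‖ + √(Fintype.card ι) := by
  linarith [norm_sub_intVec_floorVec_le x, norm_sub_norm_le (intVec (floorVec x)) x,
    norm_sub_rev x (intVec (floorVec x))]

lemma volume_preimage_floorVec (s : Finset (ι → ℤ)) :
    volume (floorVec ⁻¹' (s : Set (ι → ℤ))) = #s := by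
  have hmeas (z : ι → ℤ) : MeasurableSet (floorVec ⁻¹' {z}) := by
    rw [preimage_floorVec_singleton]
    exact (MeasurableEquiv.measurable _) (.univ_pi fun _ ↦ measurableSet_Ico)
  have hvol (z : ι → ℤ) : volume (floorVec ⁻¹' {z}) = 1 := by
    rw [preimage_floorVec_singleton, (PiLp.volume_preserving_ofLp ι).measure_preimage_equiv,
      Real.volume_pi_Ico]
    simp
  rw [← sum_measure_preimage_singleton s fun z _ ↦ hmeas z]
  simp [hvol]

lemma card_le_measureReal {K : Set (EuclideanSpace ℝ ι)} {s : Finset (ι → ℤ)}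
    (hK : volume K ≠ ⊤) (h : ∀ x, floorVec x ∈ s → x ∈ K) : #s ≤ volume.real K := by
  have hs : floorVec ⁻¹' (s : Set (ι → ℤ)) ⊆ K := h
  simpa [measureReal_def, volume_preimage_floorVec] using measureReal_mono hs hK

lemma measureReal_le_card {K : Set (EuclideanSpace ℝ ι)} {s : Finset (ι → ℤ)}
    (h : ∀ x ∈ K, floorVec x ∈ s) : volume.real K ≤ #s := by
  have hs : K ⊆ floorVec ⁻¹' (s : Set (ι → ℤ)) := h
  simpa [measureReal_def, volume_preimage_floorVec] using
    measureReal_mono (μ := volume) hs (by simp [volume_preimage_floorVec])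

lemma finite_setOf_norm_intVec_le (r : ℝ) : {z : ι → ℤ | ‖intVec z‖ ≤ r}.Finite := by
  classical
  refine (Set.finite_Icc (fun _ : ι ↦ -⌈r⌉) fun _ ↦ ⌈r⌉).subset fun z hz ↦ ?_
  have hz_abs (i : ι) : |z i| ≤ ⌈r⌉ := by
    have := ((PiLp.norm_apply_le (intVec z) i).trans hz).trans (Int.le_ceil r)
    rw [intVec_apply, Real.norm_eq_abs] at this
    exact_mod_cast this
  exact ⟨fun i ↦ (abs_le.1 (hz_abs i)).1, fun i ↦ (abs_le.1 (hz_abs i)).2⟩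

variable (ι) in
/-- The lattice points of the ball of radius `r` around the origin. -/
noncomputable def latticeBall (r : ℝ) : Finset (ι → ℤ) := (finite_setOf_norm_intVec_le r).toFinset

@[simp] lemma mem_latticeBall {r : ℝ} {z : ι → ℤ} : z ∈ latticeBall ι r ↔ ‖intVec z‖ ≤ r := by
  simp [latticeBall]

lemma card_latticeBall_le (r : ℝ) :
    #(latticeBall ι r) ≤
      volume.real (closedBall (0 : EuclideanSpace ℝ ι) (r + √(Fintype.card ι))) := by
  refine card_le_measureReal measure_closedBall_lt_top.ne fun x hx ↦ ?_
  rw [mem_latticeBall] at hx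
  rw [mem_closedBall_zero_iff]
  linarith [norm_sub_intVec_floorVec_le x, norm_sub_norm_le x (intVec (floorVec x))]

lemma measureReal_closedBall_le_card_latticeBall (r : ℝ) :
    volume.real (closedBall (0 : EuclideanSpace ℝ ι) (r - √(Fintype.card ι))) ≤
      #(latticeBall ι r) := by
  refine measureReal_le_card fun x hx ↦ mem_latticeBall.2 ?_
  rw [mem_closedBall_zero_iff] at hx
  linarith [norm_intVec_floorVec_le x]

lemma measureReal_lens_le_card (r : ℝ) (z : ι → ℤ) :
    volume.real (closedBall 0 (r - √(Fintype.card ι)) ∩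
        closedBall (-intVec z) (r - √(Fintype.card ι))) ≤
      #{w ∈ latticeBall ι r | -z - w ∈ latticeBall ι r} := by
  refine measureReal_le_card fun x ⟨hx₀, hxz⟩ ↦ ?_
  rw [mem_closedBall_zero_iff] at hx₀
  rw [mem_closedBall_iff_norm', ← neg_add', norm_neg] at hxz
  rw [Finset.mem_filter, mem_latticeBall, mem_latticeBall, ← neg_add', map_neg, norm_neg, map_add]
  constructor
  · linarith [norm_intVec_floorVec_le x]
  · have : intVec z + intVec (floorVec x) = intVec z + x - (x - intVec (floorVec x)) := by abel
    rw [this]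
    linarith [norm_sub_le (intVec z + x) (x - intVec (floorVec x)),
      norm_sub_intVec_floorVec_le x]

lemma threeAPFree_setOf_sum_sq_eq (v : ℤ) : ThreeAPFree {z : ι → ℤ | ∑ i, z i ^ 2 = v} := by
  have mem_sphere {z : ι → ℤ} (hz : ∑ i, z i ^ 2 = v) : intVec z ∈ sphere 0 (√v) := by
    rw [mem_sphere_zero_iff_norm, ← hz, ← norm_intVec_sq, Real.sqrt_sq (norm_nonneg _)]
  intro a ha b hb c hc habc
  refine intVec_injective (threeAPFree_sphere 0 (√v) (mem_sphere ha) (mem_sphere hb)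
    (mem_sphere hc) ?_)
  rw [← map_add, habc, map_add]

lemma card_zeroSumPairs_latticeBall_le (r : ℝ) :
    (#(zeroSumPairs (latticeBall ι r)) : ℝ) ≤
      (4 * r ^ 2 + 1) * ruzsaSzemerediNumberNat (3 * #(latticeBall ι r)) := by
  have hmaps : ∀ p ∈ zeroSumPairs (latticeBall ι r),
      ∑ i, (p.1 - p.2) i ^ 2 ∈ Icc 0 ⌊4 * r ^ 2⌋ := by
    intro p hp
    rw [mem_zeroSumPairs, mem_latticeBall, mem_latticeBall] at hp
    refine Finset.mem_Icc.2 ⟨sum_nonneg fun i _ ↦ sq_nonneg _, Int.le_floor.2 ?_⟩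
    rw [← norm_intVec_sq, map_sub]
    calc ‖intVec p.1 - intVec p.2‖ ^ 2 ≤ (r + r) ^ 2 := by
          gcongr
          exact (norm_sub_le _ _).trans (add_le_add hp.1 hp.2.1)
      _ = 4 * r ^ 2 := by ring
  have hcard : (#(Icc 0 ⌊4 * r ^ 2⌋) : ℝ) ≤ 4 * r ^ 2 + 1 := by
    have h0 : 0 ≤ ⌊4 * r ^ 2⌋ := Int.floor_nonneg.2 (by positivity)
    rw [Int.card_Icc, sub_zero, ← Int.cast_natCast, Int.toNat_of_nonneg (by lia)]
    push_cast
    gcongr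
    exact Int.floor_le _
  have hpigeonhole := card_le_mul_card_image_of_maps_to hmaps
    (ruzsaSzemerediNumberNat (3 * #(latticeBall ι r))) fun v _ ↦
      card_zeroSumPairs_filter_sub_mem_le _ (threeAPFree_setOf_sum_sq_eq v)
  calc (#(zeroSumPairs (latticeBall ι r)) : ℝ)
      ≤ ruzsaSzemerediNumberNat (3 * #(latticeBall ι r)) * #(Icc 0 ⌊4 * r ^ 2⌋) := by
        exact_mod_cast hpigeonhole
    _ ≤ _ := by rw [mul_comm]; gcongr

end LatticePoints

section VolumeOfBalls

variable {ι : Type*} [Fintype ι]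

lemma volume_ofLp_preimage_closedBall {r : ℝ} (hr : 0 ≤ r) :
    volume ((MeasurableEquiv.toLp 2 (ι → ℝ)).symm ⁻¹' closedBall 0 r) =
      ENNReal.ofReal ((2 * r) ^ Fintype.card ι) := by
  rw [(PiLp.volume_preserving_ofLp ι).measure_preimage_equiv, Real.volume_pi_closedBall 0 hr]

lemma measureReal_closedBall_le_two_mul_pow {r : ℝ} (hr : 0 ≤ r) :
    volume.real (closedBall (0 : EuclideanSpace ℝ ι) r) ≤ (2 * r) ^ Fintype.card ι := by
  refine ENNReal.toReal_le_of_le_ofReal (by positivity) ?_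
  rw [← volume_ofLp_preimage_closedBall hr]
  refine measure_mono fun x hx ↦ ?_
  rw [mem_closedBall_zero_iff] at hx
  exact mem_closedBall_zero_iff.2 <|
    (pi_norm_le_iff_of_nonneg hr).2 fun i ↦ (PiLp.norm_apply_le x i).trans hx

lemma two_mul_div_sqrt_card_pow_le_measureReal_closedBall {r : ℝ} (hr : 0 ≤ r) :
    (2 * (r / √(Fintype.card ι))) ^ Fintype.card ι ≤
      volume.real (closedBall (0 : EuclideanSpace ℝ ι) r) := by
  have hr' : 0 ≤ r / √(Fintype.card ι) := by positivity
  refine (ENNReal.ofReal_le_iff_le_toReal measure_closedBall_lt_top.ne).1 ?_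
  rw [← volume_ofLp_preimage_closedBall hr']
  refine measure_mono fun x hx ↦ mem_closedBall_zero_iff.2 ?_
  have hcoord (i : ι) : ‖x i‖ ≤ r / √(Fintype.card ι) :=
    (norm_le_pi_norm _ i).trans (mem_closedBall_zero_iff.1 hx)
  rw [EuclideanSpace.norm_eq]
  refine Real.sqrt_le_iff.2 ⟨hr, ?_⟩
  calc ∑ i, ‖x i‖ ^ 2 ≤ ∑ _i : ι, (r / √(Fintype.card ι)) ^ 2 := by
        gcongr with i
        exact hcoord i
    _ = Fintype.card ι * (r ^ 2 / Fintype.card ι) := by simp [div_pow]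
    _ ≤ r ^ 2 := by
        rw [mul_div_left_comm]
        exact mul_le_of_le_one_right (sq_nonneg r) (div_self_le_one _)

lemma measureReal_closedBall_mul {a r : ℝ} (ha : 0 ≤ a) (hr : 0 ≤ r) :
    volume.real (closedBall (0 : EuclideanSpace ℝ ι) (a * r)) =
      a ^ Fintype.card ι * volume.real (closedBall (0 : EuclideanSpace ℝ ι) r) := by
  rw [measureReal_def, Measure.addHaar_closedBall_mul _ _ ha hr, finrank_euclideanSpace,
    ENNReal.toReal_mul, ENNReal.toReal_ofReal (by positivity), measureReal_def]

lemma le_two_mul_of_pow_le_measureReal_closedBall [Nonempty ι] {r u : ℝ} (hr : 0 ≤ r)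
    (h : u ^ Fintype.card ι ≤ volume.real (closedBall (0 : EuclideanSpace ℝ ι) r)) : u ≤ 2 * r :=
  le_of_pow_le_pow_left₀ Fintype.card_ne_zero (by positivity)
    (h.trans (measureReal_closedBall_le_two_mul_pow hr))

lemma two_mul_le_of_measureReal_closedBall_le_pow [Nonempty ι] {r v : ℝ} (hr : 0 ≤ r) (hv : 0 ≤ v)
    (h : volume.real (closedBall (0 : EuclideanSpace ℝ ι) r) ≤ v ^ Fintype.card ι) :
    2 * r ≤ v * √(Fintype.card ι) := by
  have hcard : 0 < √(Fintype.card ι) := Real.sqrt_pos.2 (by exact_mod_cast Fintype.card_pos)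
  rw [← div_le_iff₀ hcard, mul_div_assoc]
  exact le_of_pow_le_pow_left₀ Fintype.card_ne_zero hv
    ((two_mul_div_sqrt_card_pow_le_measureReal_closedBall hr).trans h)

variable (ι) in
lemma exists_measureReal_closedBall_eq [Nonempty ι] {v : ℝ} (hv : 0 ≤ v) :
    ∃ r, 0 ≤ r ∧ volume.real (closedBall (0 : EuclideanSpace ℝ ι) r) = v := by
  set B := volume.real (ball (0 : EuclideanSpace ℝ ι) 1)
  have hB : 0 < B := ENNReal.toReal_pos (measure_ball_pos _ _ one_pos).ne' measure_ball_lt_top.ne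
  refine ⟨(v / B) ^ (Fintype.card ι : ℝ)⁻¹, by positivity, ?_⟩
  rw [Measure.addHaar_real_closedBall _ _ (by positivity), finrank_euclideanSpace,
    Real.rpow_inv_natCast_pow (by positivity) Fintype.card_ne_zero, div_mul_cancel₀ _ hB.ne']

end VolumeOfBalls

section FiniteBound

variable {ι : Type*} [Fintype ι] {c q r t η ρ : ℝ} {n : ℕ}

lemma mul_card_latticeBall_le_card_zeroSumPairs (hη₀ : 0 ≤ η) (hη₁ : η ≤ 1) (ht : 0 ≤ t)
    (hr : √(Fintype.card ι) ≤ r)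
    (h : t ^ 2 + r ^ 2 / 4 + η * (r * t) ≤ (r - √(Fintype.card ι)) ^ 2) :
    η * volume.real (closedBall (0 : EuclideanSpace ℝ ι) t) * #(latticeBall ι r) ≤
      #(zeroSumPairs (latticeBall ι r)) := by
  rw [card_zeroSumPairs, mul_comm, ← nsmul_eq_mul, Nat.cast_sum]
  refine card_nsmul_le_sum _ _ _ fun z hz ↦ ?_
  rw [mem_latticeBall] at hz
  refine (mul_measureReal_closedBall_le_measureReal_lens volume (intVec z) hη₀ hη₁
    (sub_nonneg.2 hr) (le_trans ?_ h)).trans (measureReal_lens_le_card r z)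
  gcongr

lemma card_zeroSumPairs_div_le_eta (hn : 3 * #(latticeBall ι r) ≤ n) :
    3 * #(zeroSumPairs (latticeBall ι r)) / ((4 * r ^ 2 + 1) * n ^ 2) ≤ eta n := by
  refine le_trans ?_ (ruzsaSzemerediNumberNat_div_sq_le_eta n)
  rw [← div_div]
  gcongr
  rw [div_le_iff₀ (by positivity)]
  have : (ruzsaSzemerediNumberNat (3 * #(latticeBall ι r)) : ℝ) ≤ ruzsaSzemerediNumberNat n := by
    exact_mod_cast ruzsaSzemerediNumberNat_mono hn
  calc (3 * #(zeroSumPairs (latticeBall ι r)) : ℝ)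
      ≤ 3 * ((4 * r ^ 2 + 1) * ruzsaSzemerediNumberNat (3 * #(latticeBall ι r))) := by
        gcongr
        exact card_zeroSumPairs_latticeBall_le r
    _ ≤ 3 * ((4 * r ^ 2 + 1) * ruzsaSzemerediNumberNat n) := by gcongr
    _ = _ := by ring

lemma mul_pow_mul_sq_le_card_zeroSumPairs_latticeBall (hc : 0 ≤ c) (hq : 0 ≤ q) (hη₀ : 0 ≤ η)
    (hη₁ : η ≤ 1) (h : c ^ 2 + 1 / 4 + η * c ≤ q ^ 2) (hρ₀ : 0 ≤ ρ)
    (hρ : 2 * √(Fintype.card ι) ≤ (1 - q) * ρ) :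
    η * (c * q) ^ Fintype.card ι * volume.real (closedBall (0 : EuclideanSpace ℝ ι) ρ) ^ 2 ≤
      #(zeroSumPairs (latticeBall ι (ρ - √(Fintype.card ι)))) := by
  set d := Fintype.card ι
  set V := volume.real (closedBall (0 : EuclideanSpace ℝ ι) ρ)
  have hqρ : q * ρ ≤ ρ - √d - √d := by linarith
  have hqρ₀ : 0 ≤ q * ρ := by positivity
  have hd : √d ≤ ρ - √d := by linarith
  have hcard : q ^ d * V ≤ #(latticeBall ι (ρ - √d)) := calc
    q ^ d * V = volume.real (closedBall (0 : EuclideanSpace ℝ ι) (q * ρ)) :=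
      (measureReal_closedBall_mul hq hρ₀).symm
    _ ≤ volume.real (closedBall (0 : EuclideanSpace ℝ ι) (ρ - √d - √d)) :=
      measureReal_mono (closedBall_subset_closedBall hqρ) measure_closedBall_lt_top.ne
    _ ≤ _ := measureReal_closedBall_le_card_latticeBall _
  have hlens : (c * ρ) ^ 2 + (ρ - √d) ^ 2 / 4 + η * ((ρ - √d) * (c * ρ)) ≤ (ρ - √d - √d) ^ 2 := by
    have hr₀ : 0 ≤ ρ - √d := (Real.sqrt_nonneg _).trans hd
    have hrρ : ρ - √d ≤ ρ := sub_le_self _ (Real.sqrt_nonneg _)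
    calc _ ≤ (c * ρ) ^ 2 + ρ ^ 2 / 4 + η * (ρ * (c * ρ)) := by gcongr
      _ = (c ^ 2 + 1 / 4 + η * c) * ρ ^ 2 := by ring
      _ ≤ (q * ρ) ^ 2 := by rw [mul_pow]; gcongr
      _ ≤ _ := by gcongr
  calc η * (c * q) ^ d * V ^ 2
      = η * volume.real (closedBall (0 : EuclideanSpace ℝ ι) (c * ρ)) * (q ^ d * V) := by
        rw [measureReal_closedBall_mul hc hρ₀]
        ring
    _ ≤ η * volume.real (closedBall (0 : EuclideanSpace ℝ ι) (c * ρ)) *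
        #(latticeBall ι (ρ - √d)) := by gcongr
    _ ≤ _ := mul_card_latticeBall_le_card_zeroSumPairs hη₀ hη₁ (by positivity) hd hlens

lemma mul_pow_div_sq_le_eta [Nonempty ι] (hc : 0 ≤ c) (hq : 0 ≤ q) (hη₀ : 0 ≤ η) (hη₁ : η ≤ 1)
    (h : c ^ 2 + 1 / 4 + η * c ≤ q ^ 2) (hρ₀ : 0 ≤ ρ) (hρ : 2 * √(Fintype.card ι) ≤ (1 - q) * ρ)
    (hn : volume.real (closedBall (0 : EuclideanSpace ℝ ι) ρ) = n / 3) :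
    η / 15 * (c * q) ^ Fintype.card ι / ρ ^ 2 ≤ eta n := by
  have hpairs := mul_pow_mul_sq_le_card_zeroSumPairs_latticeBall hc hq hη₀ hη₁ h hρ₀ hρ
  rw [hn] at hpairs
  set d := Fintype.card ι
  have hd : 1 ≤ √d := Real.one_le_sqrt.2 (by exact_mod_cast Fintype.card_pos (α := ι))
  have hρ₁ : 1 ≤ ρ := by nlinarith
  have hn₀ : (0 : ℝ) < n := by
    have hvol : 0 < volume.real (closedBall (0 : EuclideanSpace ℝ ι) ρ) :=
      ENNReal.toReal_pos (measure_closedBall_pos _ _ (by linarith)).ne' measure_closedBall_lt_top.ne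
    linarith
  have hcard : 3 * #(latticeBall ι (ρ - √d)) ≤ n := by
    have := card_latticeBall_le (ι := ι) (ρ - √d)
    rw [sub_add_cancel, hn, le_div_iff₀ three_pos, mul_comm] at this
    exact_mod_cast this
  calc η / 15 * (c * q) ^ d / ρ ^ 2
      = 3 * (η * (c * q) ^ d * (n / 3) ^ 2) / (5 * ρ ^ 2 * n ^ 2) := by
        field_simp
        ring
    _ ≤ 3 * #(zeroSumPairs (latticeBall ι (ρ - √d))) / ((4 * (ρ - √d) ^ 2 + 1) * n ^ 2) := by
        have hsq : (ρ - √d) ^ 2 ≤ ρ ^ 2 := by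
          gcongr
          · nlinarith [mul_nonneg hq hρ₀]
          · linarith
        gcongr
        nlinarith
    _ ≤ eta n := card_zeroSumPairs_div_le_eta hcard

lemma exists_sq_add_mul_le_sq {b : ℝ} (hb : b ^ 2 < 3 / 4) :
    ∃ q η : ℝ, 0 < q ∧ q < 1 ∧ 0 < η ∧ η ≤ 1 ∧ (b / q) ^ 2 + 1 / 4 + η * (b / q) ≤ q ^ 2 := by
  have hcont : ContinuousAt
      (fun q : ℝ ↦ (b / q) ^ 2 + 1 / 4 + (1 - q) * (b / q) - q ^ 2) 1 := by
    fun_prop (disch := norm_num)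
  have hneg : ∀ᶠ q in nhds (1 : ℝ), (b / q) ^ 2 + 1 / 4 + (1 - q) * (b / q) - q ^ 2 < 0 :=
    Tendsto.eventually_lt_const (by norm_num; linarith) hcont
  obtain ⟨q, hq, hq₀, hq₁⟩ := ((hneg.filter_mono nhdsWithin_le_nhds).and
    (Ioo_mem_nhdsLT (zero_lt_one' ℝ))).exists
  exact ⟨q, 1 - q, hq₀, hq₁, by linarith, by linarith, by linarith⟩

lemma exists_forall_mul_pow_div_le_eta {b : ℝ} (hb₀ : 0 ≤ b) (hb : b ^ 2 < 3 / 4) :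
    ∃ K δ : ℝ, 0 ≤ K ∧ 0 < δ ∧ ∀ (D n : ℕ) (u v : ℝ), 0 < D → 0 ≤ v → u ^ D ≤ n / 3 →
      n / 3 ≤ v ^ D → K * √D ≤ u → δ * b ^ D / (v ^ 2 * D) ≤ eta n := by
  obtain ⟨q, η, hq₀, hq₁, hη₀, hη₁, h⟩ := exists_sq_add_mul_le_sq hb
  refine ⟨4 / (1 - q), 4 * η / 15, div_nonneg zero_le_four (sub_nonneg.2 hq₁.le), by positivity,
    fun D n u v hD hv hun hnv hDu ↦ ?_⟩
  have : Nonempty (Fin D) := Fin.pos_iff_nonempty.1 hD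
  obtain ⟨ρ, hρ₀, hρ⟩ := exists_measureReal_closedBall_eq (Fin D) (by positivity : 0 ≤ (n / 3 : ℝ))
  have huρ : u ≤ 2 * ρ :=
    le_two_mul_of_pow_le_measureReal_closedBall (ι := Fin D) hρ₀ (by simpa [hρ])
  have hρv : 2 * ρ ≤ v * √D := by
    simpa using two_mul_le_of_measureReal_closedBall_le_pow (ι := Fin D) hρ₀ hv (by simpa [hρ])
  have hDρ : 2 * √D ≤ (1 - q) * ρ := by
    have hq : 0 < 1 - q := sub_pos.2 hq₁
    rw [div_mul_eq_mul_div, div_le_iff₀ hq] at hDu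
    nlinarith
  have hρ_pos : 0 < ρ := by
    have : 0 < √(D : ℝ) := Real.sqrt_pos.2 (by exact_mod_cast hD)
    nlinarith
  have hbound := mul_pow_div_sq_le_eta (ι := Fin D) (by positivity) hq₀.le hη₀.le hη₁ h hρ₀
    (by simpa using hDρ) hρ
  rw [div_mul_cancel₀ _ hq₀.ne', Fintype.card_fin] at hbound
  calc 4 * η / 15 * b ^ D / (v ^ 2 * D) = η / 15 * b ^ D / ((v * √D / 2) ^ 2) := by
        rw [div_pow, mul_pow, Real.sq_sqrt D.cast_nonneg]
        field_simp
        ring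
    _ ≤ η / 15 * b ^ D / ρ ^ 2 := by gcongr; linarith
    _ ≤ eta n := hbound

end FiniteBound

section Asymptotics

lemma eventually_mul_le_two_rpow {c : ℝ} (hc : 0 < c) (K : ℝ) :
    ∀ᶠ s : ℝ in atTop, K * s ≤ 2 ^ (c * s) := by
  have hlittleO := (isLittleO_pow_exp_pos_mul_atTop 1
    (mul_pos (Real.log_pos one_lt_two) hc)).const_mul_left K
  filter_upwards [hlittleO.bound one_pos] with s hs
  simpa [Real.rpow_def_of_pos, mul_assoc] using (le_abs_self _).trans hs

lemma tendsto_sqrt_logb_two_natCast_atTop :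
    Tendsto (fun n : ℕ ↦ √(Real.logb 2 n)) atTop atTop :=
  Real.tendsto_sqrt_atTop.comp <|
    (Real.tendsto_logb_atTop one_lt_two).comp tendsto_natCast_atTop_atTop

lemma two_rpow_neg_sq_lt_three_quarters {γ : ℝ} (hγ : Real.logb 2 (4 / 3) / 2 < γ) :
    ((2 : ℝ) ^ (-γ)) ^ 2 < 3 / 4 := by
  calc ((2 : ℝ) ^ (-γ)) ^ 2 = 2 ^ (-γ * 2) := by
        rw [← Real.rpow_mul_natCast zero_le_two]; norm_cast
    _ < 2 ^ (-Real.logb 2 (4 / 3)) := Real.rpow_lt_rpow_of_exponent_lt one_lt_two (by linarith)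
    _ = 3 / 4 := by
        rw [Real.rpow_neg zero_le_two, Real.rpow_logb] <;> norm_num

lemma two_rpow_pow_le_two_rpow_sq_div_three {A s : ℝ} {D : ℕ} (hA : 0 < A) (hs : 2 ≤ s)
    (hD : D ≤ A * s) : ((2 : ℝ) ^ ((2 * A)⁻¹ * s)) ^ D ≤ 2 ^ (s ^ 2) / 3 := by
  have hexp : (2 * A)⁻¹ * s * D ≤ s ^ 2 / 2 := calc
    (2 * A)⁻¹ * s * D ≤ (2 * A)⁻¹ * s * (A * s) := by gcongr
    _ = s ^ 2 / 2 := by field_simp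
  have hthree : (3 : ℝ) ≤ 2 ^ (s ^ 2 / 2) := calc
    (3 : ℝ) ≤ 2 ^ (2 : ℝ) := by norm_num
    _ ≤ 2 ^ (s ^ 2 / 2) := Real.rpow_le_rpow_of_exponent_le one_le_two (by nlinarith)
  rw [← Real.rpow_mul_natCast zero_le_two, le_div_iff₀ three_pos, ← add_halves (s ^ 2),
    Real.rpow_add two_pos]
  gcongr
  exact one_le_two

lemma two_rpow_sq_le_two_rpow_div_pow {a s : ℝ} {D : ℕ} (ha : 0 < a) (hs : 0 ≤ s)
    (hD : a * s ≤ D) : (2 : ℝ) ^ (s ^ 2) ≤ (2 ^ (s / a)) ^ D := by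
  rw [← Real.rpow_mul_natCast zero_le_two]
  refine Real.rpow_le_rpow_of_exponent_le one_le_two ?_
  calc s ^ 2 = s / a * (a * s) := by field_simp
    _ ≤ s / a * D := by gcongr

lemma div_mul_two_rpow_le_two_rpow_pow_div {a γ s : ℝ} {D : ℕ} (ha : 0 < a) (hγ : 0 ≤ γ)
    (hs : 1 ≤ s) (hD₀ : 0 < D) (hD : D ≤ a * s + 1) :
    2 ^ (-γ) / (a + 1) / s * 2 ^ (-(γ * a + 2 / a) * s) ≤
      ((2 : ℝ) ^ (-γ)) ^ D / ((2 ^ (s / a)) ^ 2 * D) := by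
  have hexp : (2 : ℝ) ^ (-(γ * a + 2 / a) * s) * 2 ^ (-γ) * (2 ^ (s / a)) ^ 2 =
      2 ^ (-γ * (a * s + 1)) := by
    rw [← Real.rpow_mul_natCast zero_le_two, ← Real.rpow_add two_pos, ← Real.rpow_add two_pos]
    congr 1
    push_cast
    field_simp
    ring
  calc 2 ^ (-γ) / (a + 1) / s * 2 ^ (-(γ * a + 2 / a) * s)
      = 2 ^ (-γ * (a * s + 1)) / ((2 ^ (s / a)) ^ 2 * ((a + 1) * s)) := by
        rw [← hexp]
        field_simp
    _ ≤ (2 ^ (-γ)) ^ D / ((2 ^ (s / a)) ^ 2 * D) := by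
        rw [← Real.rpow_mul_natCast zero_le_two (-γ)]
        gcongr ?_ / (_ * ?_)
        · exact Real.rpow_le_rpow_of_exponent_le one_le_two
            (mul_le_mul_of_nonpos_left hD (neg_nonpos.2 hγ))
        · linarith

lemma eventually_div_mul_two_rpow_le_eta {a γ : ℝ} (ha : 0 < a)
    (hγ : Real.logb 2 (4 / 3) / 2 < γ) :
    ∃ C > 0, ∀ᶠ n : ℕ in atTop,
      C / √(Real.logb 2 n) * 2 ^ (-(γ * a + 2 / a) * √(Real.logb 2 n)) ≤ eta n := by
  have hγ₀ : 0 < γ := lt_trans (half_pos (Real.logb_pos one_lt_two (by norm_num))) hγ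
  obtain ⟨K, δ, hK, hδ, hbound⟩ := exists_forall_mul_pow_div_le_eta (by positivity)
    (two_rpow_neg_sq_lt_three_quarters hγ)
  refine ⟨δ * (2 ^ (-γ) / (a + 1)), by positivity, ?_⟩
  filter_upwards [tendsto_sqrt_logb_two_natCast_atTop.eventually <|
    (eventually_ge_atTop 2).and (eventually_mul_le_two_rpow
      (by positivity : 0 < (2 * (a + 1))⁻¹) (K * (a + 1))),
    eventually_ge_atTop 1] with n ⟨hs, hKs⟩ hn
  set s := √(Real.logb 2 n) with hs_def
  have hn_eq : (n : ℝ) = 2 ^ (s ^ 2) := by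
    rw [hs_def, Real.sq_sqrt (Real.logb_nonneg one_lt_two (by exact_mod_cast hn)),
      Real.rpow_logb two_pos (by norm_num) (by exact_mod_cast hn)]
  set D := ⌈a * s⌉₊
  have hD₀ : 0 < D := Nat.ceil_pos.2 (by positivity)
  have hD : D ≤ a * s + 1 := (Nat.ceil_lt_add_one (by positivity)).le
  have hD' : D ≤ (a + 1) * s := by linarith
  have hun : ((2 : ℝ) ^ ((2 * (a + 1))⁻¹ * s)) ^ D ≤ n / 3 :=
    hn_eq ▸ two_rpow_pow_le_two_rpow_sq_div_three (by positivity) hs hD'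
  have hnv : (n / 3 : ℝ) ≤ (2 ^ (s / a)) ^ D :=
    (div_le_self n.cast_nonneg (by norm_num)).trans <|
      hn_eq.trans_le <| two_rpow_sq_le_two_rpow_div_pow ha (by linarith) (Nat.le_ceil _)
  have hDu : K * √D ≤ 2 ^ ((2 * (a + 1))⁻¹ * s) := by
    refine le_trans ?_ hKs
    rw [mul_assoc]
    gcongr
    exact (Real.sqrt_le_self_iff.2 (.inr (by exact_mod_cast hD₀))).trans hD'
  calc δ * (2 ^ (-γ) / (a + 1)) / s * 2 ^ (-(γ * a + 2 / a) * s)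
      = δ * (2 ^ (-γ) / (a + 1) / s * 2 ^ (-(γ * a + 2 / a) * s)) := by ring
    _ ≤ δ * ((2 ^ (-γ)) ^ D / ((2 ^ (s / a)) ^ 2 * D)) := by
        gcongr
        exact div_mul_two_rpow_le_two_rpow_pow_div ha hγ₀.le (by linarith) hD₀ hD
    _ = δ * (2 ^ (-γ)) ^ D / ((2 ^ (s / a)) ^ 2 * D) := (mul_div_assoc _ _ _).symm
    _ ≤ eta n := hbound D n _ _ hD₀ (by positivity) hun hnv hDu

end Asymptotics

theorem stmt_1 :
    ∀ ε : ℝ, 0 < ε → ∃ N : ℕ, ∀ n : ℕ, N ≤ n →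
      (2 : ℝ) ^ (-(2 * Real.sqrt (Real.logb 2 (4 / 3)) + ε) * Real.sqrt (Real.logb 2 n))
        ≤ eta n := by
  intro ε hε
  set κ := Real.logb 2 (4 / 3)
  have hκ : 0 < κ := Real.logb_pos one_lt_two (by norm_num)
  have hexponent :
      (κ / 2 + ε * √κ / 4) * (2 / √κ) + 2 / (2 / √κ) = 2 * √κ + ε / 2 := by
    field_simp
    linear_combination -8 * Real.sq_sqrt hκ.le
  obtain ⟨C, hC, hbound⟩ := eventually_div_mul_two_rpow_le_eta (a := 2 / √κ)
    (γ := κ / 2 + ε * √κ / 4) (by positivity) (lt_add_of_pos_right _ (by positivity))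
  rw [hexponent] at hbound
  refine eventually_atTop.1 ?_
  filter_upwards [hbound, tendsto_sqrt_logb_two_natCast_atTop.eventually <|
    (eventually_gt_atTop 0).and (eventually_mul_le_two_rpow (half_pos hε) C⁻¹)] with n hn ⟨hs, hsC⟩
  refine le_trans ?_ hn
  set s := √(Real.logb 2 n)
  rw [show -(2 * √κ + ε / 2) * s = ε / 2 * s + -(2 * √κ + ε) * s by ring, Real.rpow_add two_pos,
    ← mul_assoc]
  refine le_mul_of_one_le_left (by positivity) ?_
  calc (1 : ℝ) = C / s * (C⁻¹ * s) := by field_simp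
    _ ≤ C / s * 2 ^ (ε / 2 * s) := by gcongr
end

section
/- Let A be a finite set, let n ≥ 1, and let f₁ : A → V₁, f₂ : A → V₂, f₃ : A → V₃ be maps with |fᵢ(A)| ≤ n for i = 1, 2, 3. Suppose that whenever (a₁, a₂, a₃) ∈ A³ satisfies f₁(a₂) = f₁(a₃), f₂(a₃) = f₂(a₁), and f₃(a₁) = f₃(a₂), we have a₁ = a₂ = a₃. Then η(3n) ≥ |A| / (9n²). -/
/-!
Each `a ∈ A` spans a triangle on the vertices `f₁ a`, `f₂ a`, `f₃ a` of a tripartite graph with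
parts `f₁(A)`, `f₂(A)`, `f₃(A)`. A triangle `x₁x₂x₃` of this graph has its three edges opposite
`x₁`, `x₂`, `x₃` coming from some `a₁`, `a₂`, `a₃`, and this is exactly a coincidence
`f₁ a₂ = f₁ a₃`, `f₂ a₃ = f₂ a₁`, `f₃ a₁ = f₃ a₂`. As all coincidences are trivial, the graph is
locally linear and has exactly `|A|` triangles, hence `3|A|` edges.
-/

open Finset SimpleGraph TripartiteFromTriangles

section LocallyLinear

variable {V : Type*} {G : SimpleGraph V} {u v : V}

theorem commonNeighbors_subsingleton_of_edgeDisjointTriangles (hG : G.EdgeDisjointTriangles)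
    (huv : G.Adj u v) : (G.commonNeighbors u v).Subsingleton := by
  classical
  intro w hw w' hw'
  have triangle_mem {x : V} (hx : x ∈ G.commonNeighbors u v) : {u, v, x} ∈ G.cliqueSet 3 :=
    is3Clique_triple_iff.2 ⟨huv, hx⟩
  have triangle_eq : ({u, v, w} : Finset V) = {u, v, w'} := by
    by_contra hne
    exact huv.ne <| hG (triangle_mem hw) (triangle_mem hw') hne (by simp) (by simp)
  have mem_triangle : w ∈ ({u, v, w'} : Finset V) := triangle_eq ▸ by simp
  simpa [hw.1.ne', hw.2.ne'] using mem_triangle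

theorem existsUnique_adj_adj_of_locallyLinear (hG : G.LocallyLinear) (huv : G.Adj u v) :
    ∃! w, G.Adj u w ∧ G.Adj v w := by
  classical
  obtain ⟨s, hs, hu, hv⟩ := hG.2 huv
  obtain ⟨w, hws, hw⟩ : ∃ w ∈ s, w ∉ ({u, v} : Finset V) :=
    exists_mem_notMem_of_card_lt_card (hs.card_eq ▸ card_le_two.trans_lt (by norm_num))
  obtain ⟨hwu, hwv⟩ : w ≠ u ∧ w ≠ v := by simpa using hw
  have hw_adj : G.Adj u w ∧ G.Adj v w :=
    ⟨hs.isClique hu hws hwu.symm, hs.isClique hv hws hwv.symm⟩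
  exact ⟨w, hw_adj, fun w' hw' ↦
    commonNeighbors_subsingleton_of_edgeDisjointTriangles hG.1 huv hw' hw_adj⟩

end LocallyLinear

section Eta

variable {m : ℕ}

theorem ncard_edgeSet_div_sq_le_eta {G : SimpleGraph (Fin m)} (hG : G.LocallyLinear) :
    (G.edgeSet.ncard : ℝ) / m ^ 2 ≤ eta m := by
  refine le_csSup (Set.Finite.bddAbove ?_)
    ⟨G, fun _ _ ↦ existsUnique_adj_adj_of_locallyLinear hG, rfl⟩
  refine (Set.finite_range fun H : SimpleGraph (Fin m) ↦ (H.edgeSet.ncard : ℝ) / m ^ 2).subset ?_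
  rintro _ ⟨H, -, rfl⟩
  exact ⟨H, rfl⟩

-- Isolated vertices may be added freely, so fewer than `m` vertices are enough.
theorem ncard_edgeSet_div_sq_le_eta_of_card_le {V : Type*} [Fintype V] {G : SimpleGraph V}
    (hG : G.LocallyLinear) (hV : Fintype.card V ≤ m) :
    (G.edgeSet.ncard : ℝ) / m ^ 2 ≤ eta m := by
  obtain ⟨e⟩ : Nonempty (V ↪ Fin m) :=
    Function.Embedding.nonempty_of_card_le (by rwa [Fintype.card_fin])
  have ncard_map : (G.map e).edgeSet.ncard = G.edgeSet.ncard := by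
    rw [edgeSet_map, Set.ncard_map]
  exact ncard_map ▸ ncard_edgeSet_div_sq_le_eta (hG.map e)

theorem three_mul_card_triangles_div_sq_le_eta {α β γ : Type*} [Fintype α] [Fintype β] [Fintype γ]
    (t : Finset (α × β × γ)) [ExplicitDisjoint t] [NoAccidental t]
    (hm : Fintype.card α + Fintype.card β + Fintype.card γ ≤ m) :
    (3 * #t : ℝ) / m ^ 2 ≤ eta m := by
  classical
  have card_edges : (graph t).edgeSet.ncard = 3 * #t := by
    rw [← coe_edgeFinset, Set.ncard_coe_finset, (locallyLinear t).card_edgeFinset, card_triangles]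
  have card_vertices : Fintype.card (α ⊕ β ⊕ γ) ≤ m := by
    simpa only [Fintype.card_sum, add_assoc] using hm
  simpa [card_edges] using
    ncard_edgeSet_div_sq_le_eta_of_card_le (locallyLinear t) card_vertices

end Eta

/-- The condition on three labellings of `α` that makes the triangles `{f₁ a, f₂ a, f₃ a}` (with
labels of different `fᵢ` regarded as distinct vertices) edge-disjoint and the only triangles in
their union: here `aᵢ` is the triangle containing the edge opposite the `i`-th vertex. -/
def OnlyTrivialCoincidences {α V₁ V₂ V₃ : Type*} (f₁ : α → V₁) (f₂ : α → V₂) (f₃ : α → V₃) :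
    Prop :=
  ∀ ⦃a₁ a₂ a₃⦄, f₁ a₂ = f₁ a₃ → f₂ a₃ = f₂ a₁ → f₃ a₁ = f₃ a₂ → a₁ = a₂ ∧ a₂ = a₃

namespace OnlyTrivialCoincidences

variable {α V₁ V₂ V₃ : Type*} {f₁ : α → V₁} {f₂ : α → V₂} {f₃ : α → V₃}

theorem injective (h : OnlyTrivialCoincidences f₁ f₂ f₃) :
    Function.Injective fun a ↦ (f₁ a, f₂ a, f₃ a) := by
  intro a b hab
  obtain ⟨-, h₂, h₃⟩ : f₁ a = f₁ b ∧ f₂ a = f₂ b ∧ f₃ a = f₃ b := by simpa using hab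
  exact (h rfl h₂.symm h₃).1

section Disjointness

variable [Fintype α] [DecidableEq V₁] [DecidableEq V₂] [DecidableEq V₃]

theorem explicitDisjoint (h : OnlyTrivialCoincidences f₁ f₂ f₃) :
    ExplicitDisjoint (univ.image fun a ↦ (f₁ a, f₂ a, f₃ a)) where
  inj₀ := by
    simp only [mem_image, mem_univ, true_and, Prod.mk.injEq]
    rintro _ _ _ _ ⟨x, rfl, rfl, rfl⟩ ⟨y, rfl, h₂, h₃⟩
    rw [(h rfl h₂ h₃.symm).1]
  inj₁ := by
    simp only [mem_image, mem_univ, true_and, Prod.mk.injEq]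
    rintro _ _ _ _ ⟨x, rfl, rfl, rfl⟩ ⟨y, h₁, rfl, h₃⟩
    rw [(h h₁.symm rfl h₃).1]
  inj₂ := by
    simp only [mem_image, mem_univ, true_and, Prod.mk.injEq]
    rintro _ _ _ _ ⟨x, rfl, rfl, rfl⟩ ⟨y, h₁, h₂, rfl⟩
    rw [(h h₁.symm h₂ rfl).2]

theorem noAccidental (h : OnlyTrivialCoincidences f₁ f₂ f₃) :
    NoAccidental (univ.image fun a ↦ (f₁ a, f₂ a, f₃ a)) where
  eq_or_eq_or_eq := by
    simp only [mem_image, mem_univ, true_and, Prod.mk.injEq]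
    rintro _ _ _ _ _ _ ⟨a₁, rfl, rfl, rfl⟩ ⟨a₂, rfl, rfl, h₃⟩ ⟨a₃, h₁, h₂, rfl⟩
    exact .inl <| congrArg f₁ (h h₁.symm h₂ h₃.symm).1.symm

end Disjointness

theorem three_mul_card_div_sq_le_eta [Fintype α] [Fintype V₁] [Fintype V₂] [Fintype V₃] {m : ℕ}
    (h : OnlyTrivialCoincidences f₁ f₂ f₃)
    (hm : Fintype.card V₁ + Fintype.card V₂ + Fintype.card V₃ ≤ m) :
    (3 * Fintype.card α : ℝ) / m ^ 2 ≤ eta m := by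
  classical
  have := h.explicitDisjoint
  have := h.noAccidental
  simpa only [card_image_of_injective _ h.injective, card_univ] using
    three_mul_card_triangles_div_sq_le_eta (univ.image fun a ↦ (f₁ a, f₂ a, f₃ a)) hm

end OnlyTrivialCoincidences

theorem stmt_4_general {α V₁ V₂ V₃ : Type*} [DecidableEq V₁] [DecidableEq V₂] [DecidableEq V₃]
    (A : Finset α) (f₁ : α → V₁) (f₂ : α → V₂) (f₃ : α → V₃) (m : ℕ) (_one_le_m : 1 ≤ m)
    (hm : #(A.image f₁) + #(A.image f₂) + #(A.image f₃) ≤ m)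
    (hA : ∀ a₁ ∈ A, ∀ a₂ ∈ A, ∀ a₃ ∈ A,
      f₁ a₂ = f₁ a₃ → f₂ a₃ = f₂ a₁ → f₃ a₁ = f₃ a₂ → a₁ = a₂ ∧ a₂ = a₃) :
    (3 * #A : ℝ) / m ^ 2 ≤ eta m := by
  let g₁ (a : A) : A.image f₁ := ⟨f₁ a, mem_image_of_mem f₁ a.2⟩
  let g₂ (a : A) : A.image f₂ := ⟨f₂ a, mem_image_of_mem f₂ a.2⟩
  let g₃ (a : A) : A.image f₃ := ⟨f₃ a, mem_image_of_mem f₃ a.2⟩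
  have coincidences : OnlyTrivialCoincidences g₁ g₂ g₃ := by
    intro a₁ a₂ a₃ h₁ h₂ h₃
    simpa only [Subtype.ext_iff] using hA a₁ a₁.2 a₂ a₂.2 a₃ a₃.2
      (congrArg Subtype.val h₁) (congrArg Subtype.val h₂) (congrArg Subtype.val h₃)
  simpa only [Fintype.card_coe] using
    coincidences.three_mul_card_div_sq_le_eta (by simpa only [Fintype.card_coe] using hm)

theorem stmt_4 {α V₁ V₂ V₃ : Type*} [DecidableEq V₁] [DecidableEq V₂] [DecidableEq V₃]
    (A : Finset α) (f₁ : α → V₁) (f₂ : α → V₂) (f₃ : α → V₃) (n : ℕ) (hn : 1 ≤ n)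
    (h₁ : (A.image f₁).card ≤ n) (h₂ : (A.image f₂).card ≤ n) (h₃ : (A.image f₃).card ≤ n)
    (hA : ∀ a₁ ∈ A, ∀ a₂ ∈ A, ∀ a₃ ∈ A,
      f₁ a₂ = f₁ a₃ → f₂ a₃ = f₂ a₁ → f₃ a₁ = f₃ a₂ → a₁ = a₂ ∧ a₂ = a₃) :
    (A.card : ℝ) / (9 * n ^ 2) ≤ eta (3 * n) := by
  calc (A.card : ℝ) / (9 * n ^ 2)
      ≤ (3 * A.card : ℝ) / (3 * n : ℕ) ^ 2 := by
        rw [show ((3 * n : ℕ) : ℝ) ^ 2 = 9 * n ^ 2 by push_cast; ring]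
        gcongr
        exact le_mul_of_one_le_left (Nat.cast_nonneg _) (by norm_num)
    _ ≤ eta (3 * n) := stmt_4_general A f₁ f₂ f₃ (3 * n) (by omega) (by omega) hA
end

section
/- Let D ≥ 1 and let S ⊆ ℝ^D be a Lebesgue-measurable set of finite measure. Then there exists t ∈ [0,1)^D such that the number of integer lattice points in t + S is at most μ(S), i.e., |(t + S) ∩ ℤ^D| ≤ μ(S), where μ denotes Lebesgue measure. -/
open MeasureTheory

/-! A translate `t + S` contains as many lattice points as the orbit of `t` under the lattice
contains points of `-S`. Integrated over a fundamental domain `F`, the number of orbit points in a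
measurable set gives the measure of that set, so the least value of this number on `F`, times the
measure of `F`, is at most that measure. The least value is attained because `ℕ∞` is well-ordered.
-/

section Action

variable {G E : Type*} [AddGroup G] [AddAction G E]

theorem tsum_indicator_vadd_eq_encard (S : Set E) (x : E) :
    ∑' g : G, S.indicator (1 : E → ENNReal) (g +ᵥ x) = {g : G | g +ᵥ x ∈ S}.encard := by
  rw [← ENNReal.tsum_set_one, tsum_subtype {g : G | g +ᵥ x ∈ S} fun _ ↦ (1 : ENNReal)]
  rfl

variable [MeasurableSpace E] [MeasurableConstVAdd G E] {S : Set E}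

theorem measurable_indicator_vadd (hS : MeasurableSet S) (g : G) :
    Measurable fun x ↦ S.indicator (1 : E → ENNReal) (g +ᵥ x) :=
  (measurable_one.indicator hS).comp (measurable_const_vadd g)

variable [Countable G]

theorem measurable_encard_vadd_mem (hS : MeasurableSet S) :
    Measurable fun x ↦ ({g : G | g +ᵥ x ∈ S}.encard : ENNReal) := by
  simp only [← tsum_indicator_vadd_eq_encard]
  exact Measurable.tsum (measurable_indicator_vadd hS)

variable {μ : Measure E} [VAddInvariantMeasure G E μ] {F : Set E}

theorem setLIntegral_encard_vadd_mem (hF : IsAddFundamentalDomain G F μ) (hS : MeasurableSet S) :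
    ∫⁻ x in F, {g : G | g +ᵥ x ∈ S}.encard ∂μ = μ S := by
  calc
    ∫⁻ x in F, {g : G | g +ᵥ x ∈ S}.encard ∂μ
      = ∫⁻ x in F, ∑' g : G, S.indicator 1 (g +ᵥ x) ∂μ := by
        simp only [tsum_indicator_vadd_eq_encard]
    _ = ∑' g : G, ∫⁻ x in F, S.indicator 1 (g +ᵥ x) ∂μ :=
        lintegral_tsum fun g ↦ (measurable_indicator_vadd hS g).aemeasurable
    _ = ∫⁻ x, S.indicator 1 x ∂μ := (hF.lintegral_eq_tsum'' _).symm
    _ = μ S := lintegral_indicator_one hS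

theorem exists_mem_encard_vadd_mem_mul_measure_le (hF : IsAddFundamentalDomain G F μ)
    (hne : F.Nonempty) (S : Set E) :
    ∃ t ∈ F, ({g : G | g +ᵥ t ∈ S}.encard : ENNReal) * μ F ≤ μ S := by
  let count (A : Set E) (x : E) : ℕ∞ := {g : G | g +ᵥ x ∈ A}.encard
  let T := toMeasurable μ S
  have hT : MeasurableSet T := measurableSet_toMeasurable μ S
  obtain ⟨t, htF, ht⟩ : ∃ t ∈ F, ∀ x ∈ F, count T t ≤ count T x := by
    obtain ⟨t, htF, ht⟩ := exists_minimalFor_of_wellFoundedLT (· ∈ F) (count T) hne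
    exact ⟨t, htF, fun x hx ↦ (le_total _ _).elim id (ht hx)⟩
  refine ⟨t, htF, ?_⟩
  calc
    (count S t : ENNReal) * μ F ≤ count T t * μ F := by
      gcongr
      exact Set.encard_le_encard fun g hg ↦ subset_toMeasurable μ S hg
    _ = ∫⁻ _ in F, count T t ∂μ := (setLIntegral_const F _).symm
    _ ≤ ∫⁻ x in F, count T x ∂μ :=
      setLIntegral_mono (measurable_encard_vadd_mem hT) fun x hx ↦ by exact_mod_cast ht x hx
    _ = μ T := setLIntegral_encard_vadd_mem hF hT
    _ = μ S := measure_toMeasurable S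

end Action

theorem encard_image_add_inter_eq {E : Type*} [AddGroup E] (L : AddSubgroup E) (t : E)
    (S : Set E) : ((t + ·) '' S ∩ L).encard = {g : L | g +ᵥ t ∈ -S}.encard := by
  have neg_coe_injective : Function.Injective fun g : L ↦ -(g : E) :=
    neg_injective.comp Subtype.val_injective
  rw [← neg_coe_injective.encard_image]
  congr 1
  ext x
  constructor
  · rintro ⟨⟨s, hs, rfl⟩, hx⟩
    exact ⟨⟨-(t + s), neg_mem hx⟩, by simpa [AddSubgroup.vadd_def] using hs, neg_neg _⟩
  · rintro ⟨g, hg, rfl⟩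
    exact ⟨⟨-(g +ᵥ t), hg, by simp [AddSubgroup.vadd_def]⟩, neg_mem g.2⟩

theorem stmt_11_general {E : Type*} [AddGroup E] [MeasurableSpace E] [MeasurableAdd E]
    [MeasurableNeg E] {μ : Measure E} [μ.IsAddLeftInvariant] [μ.IsNegInvariant]
    {L : AddSubgroup E} [Countable L] {F : Set E} (hF : IsAddFundamentalDomain L F μ)
    (hne : F.Nonempty) (S : Set E) :
    ∃ t ∈ F, (((t + ·) '' S ∩ L).encard : ENNReal) * μ F ≤ μ S := by
  simpa only [encard_image_add_inter_eq, Measure.measure_neg] using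
    exists_mem_encard_vadd_mem_mul_measure_le hF hne (-S)

section IntegerLattice

variable (ι : Type*)

theorem coe_span_range_basisFun [Finite ι] :
    ((Submodule.span ℤ (Set.range (Pi.basisFun ℝ ι))).toAddSubgroup : Set (ι → ℝ)) =
      {x | ∀ i, ∃ m : ℤ, x i = (m : ℝ)} := by
  ext x
  simp [Module.Basis.mem_span_iff_repr_mem, eq_comm]

theorem volume_fundamentalDomain_basisFun [Fintype ι] :
    volume (ZSpan.fundamentalDomain (Pi.basisFun ℝ ι)) = 1 := by
  simp [ZSpan.fundamentalDomain_pi_basisFun, volume_pi, Measure.pi_pi]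

end IntegerLattice

theorem stmt_11 (D : ℕ) (hD : 1 ≤ D) (S : Set (Fin D → ℝ))
    (hS : MeasurableSet S) (hfin : volume S < ⊤) :
    ∃ t : Fin D → ℝ, (∀ i, 0 ≤ t i ∧ t i < 1) ∧
      (((t + ·) '' S ∩ {x : Fin D → ℝ | ∀ i, ∃ m : ℤ, x i = m}).encard : ENNReal) ≤ volume S := by
  have : Countable (Submodule.span ℤ (Set.range (Pi.basisFun ℝ (Fin D)))).toAddSubgroup :=
    inferInstanceAs (Countable (Submodule.span ℤ _))
  simpa only [coe_span_range_basisFun, volume_fundamentalDomain_basisFun, mul_one,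
    ZSpan.mem_fundamentalDomain, Pi.basisFun_repr, Set.mem_Ico] using
    stmt_11_general (ZSpan.isAddFundamentalDomain' (Pi.basisFun ℝ (Fin D)) volume)
      ⟨0, by simp [ZSpan.mem_fundamentalDomain]⟩ S
end
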